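/- Let x ∈ O(m,n) be nondegenerate and not lying in A, with rank r, level ℓ and corank c, and suppose x satisfies (†). Then for every k ∈ [m] with k ≠ ℓ, one of the following holds: (i) x∂_k lies in A; (ii) x∂_k does not lie in A and satisfies (†); or (iii) x∂_k does not lie in A, does not satisfy (†), and (corank(x∂_k), level(x∂_k)) < (c, ℓ) in the lexicographic order. -/

import Mathlib

/-!
The number of preimages of the top vertex `n` under `α` is determined by the first index that `α`
sends to `n`, so the corank of an element of rank `r` is `(number of indices) - r`. Let `r'` be the
rank of the face `x ∂ₖ`. If `r ≤ r'` the corank drops. Otherwise `r' + 1 = r` and `k < r`, so that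
passing to the face is compatible with splitting the support according to the value at the rank.
Then:

* if `k < ℓ`, the index `ℓ - 1` already witnesses that the level has dropped;
* if `ℓ < k`, the index `ℓ` witnesses that the level has not grown, and if it stays equal to `ℓ`,
  then `k` lies beyond `ℓ - 1` and `ℓ`, so degeneracy of the `n`-part at `ℓ - 1` is inherited.

The level of `x` is positive: if it were `0`, both parts of `x` would be degenerate at `0` (here
`ℓ - 1` is read as `0`), and so would `x`. Degeneracy of `x` at `k` is used in the form that all
operators in the support take equal values at `k` and `k + 1` (`isDegenAt_iff`).
-/

abbrev ZD (a b : ℕ) := (Fin a →o Fin b) →₀ ℤ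

noncomputable def act {a b c : ℕ} (x : ZD b c) (β : Fin a →o Fin b) : ZD a c :=
  Finsupp.mapDomain (fun α => α.comp β) x

def face {m : ℕ} (i : Fin (m+1)) : Fin m →o Fin (m+1) :=
  ⟨i.succAbove, (Fin.succAboveOrderEmb i).monotone⟩

def degen {m : ℕ} (i : Fin m) : Fin (m+1) →o Fin m :=
  ⟨i.predAbove, Fin.predAbove_right_monotone i⟩

def memO {a b : ℕ} (x : ZD a b) : Prop :=
  (x.sum fun _ c => c) = 1 ∧
    ∀ (p : ℕ) (β : Fin (p+1) →o Fin a) (γ : Fin (p+1) →o Fin b),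
      Function.Injective ⇑β → Function.Injective ⇑γ → 0 ≤ act x β γ

/-- The witness operation `x ▽ₖ y`, for `x, y ∈ ℤΔ([m],[n])` and `1 ≤ k ≤ m`. -/
noncomputable def fill {m b : ℕ} (k : ℕ) (h1 : 1 ≤ k) (h2 : k ≤ m)
    (x y : ZD (m+1) b) : ZD (m+2) b :=
  act x (degen ⟨k, by omega⟩)
    - act (act (act x (face ⟨k-1, by omega⟩)) (degen ⟨k-1, by omega⟩)) (degen ⟨k-1, by omega⟩)
    + act y (degen ⟨k-1, by omega⟩)

/-- The pasting operation `x ⋆ₖ y`. -/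
noncomputable def paste {m b : ℕ} (k : ℕ) (h1 : 1 ≤ k) (h2 : k ≤ m)
    (x y : ZD (m+1) b) : ZD (m+1) b :=
  x - act (act x (face ⟨k-1, by omega⟩)) (degen ⟨k-1, by omega⟩) + y

/-- `x` is degenerate at `k`, i.e. `x = y σₖ` for some `y` one dimension lower. -/
def isDegenAt {a b : ℕ} (x : ZD a b) (k : ℕ) : Prop :=
  ∃ (p : ℕ) (hp : a = p + 1) (hk : k < p) (y : ZD p b),
    x = hp ▸ act y (degen ⟨k, hk⟩)

def isDegen {a b : ℕ} (x : ZD a b) : Prop := ∃ k, isDegenAt x k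

/-- The number of preimages of the top element `n` under `α`. -/
def npre {a n : ℕ} (α : Fin a →o Fin (n+1)) : ℕ :=
  (Finset.univ.filter fun i => α i = Fin.last n).card

/-- `x` lies in the simplicial subset `A`: all operators in the support of `x`
have equally many preimages of the top element. -/
def inA {a n : ℕ} (x : ZD a (n+1)) : Prop :=
  ∀ α ∈ x.support, ∀ β ∈ x.support, npre α = npre β

/-- `r` is the rank of `x`: the least `i` such that some `α ∈ supp x` has `α i = n`. -/
def isRank {a n : ℕ} (x : ZD a (n+1)) (r : Fin a) : Prop :=
  IsLeast {i : Fin a | ∃ α ∈ x.support, α i = Fin.last n} r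

/-- `x̌`: the part of `x` supported on operators with `α r < n`. -/
noncomputable def checkPart {a n : ℕ} (x : ZD a (n+1)) (r : Fin a) : ZD a (n+1) :=
  x.filter (fun α => ¬ (α r = Fin.last n))

/-- `x̄`: the part of `x` supported on operators with `α r = n`. -/
noncomputable def barPart {a n : ℕ} (x : ZD a (n+1)) (r : Fin a) : ZD a (n+1) :=
  x.filter (fun α => α r = Fin.last n)

/-- `ℓ` is the level of `x` (with rank `r`). -/
def isLevel {a n : ℕ} (x : ZD a (n+1)) (r ℓ : Fin a) : Prop :=
  IsLeast {i : Fin a | ∀ α ∈ (checkPart x r).support, α i = α r} ℓ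

/-- Condition (†): `x̄` is degenerate at `ℓ - 1`. -/
def dagger {a n : ℕ} (x : ZD a (n+1)) (r ℓ : Fin a) : Prop :=
  isDegenAt (barPart x r) ((ℓ : ℕ) - 1)

/-- The corank of `x`: the greatest number of preimages of `n` among operators in `supp x`. -/
def corank {a n : ℕ} (x : ZD a (n+1)) : ℕ := x.support.sup npre

/-- `u = x̌ + (x̄ ∂ℓ) σ(ℓ-1)`. -/
noncomputable def uPart {m n : ℕ} (x : ZD (m+1) (n+1)) (r ℓ : Fin (m+1))
    (h1 : 1 ≤ (ℓ : ℕ)) : ZD (m+1) (n+1) :=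
  checkPart x r
    + act (act (barPart x r) (face ℓ)) (degen ⟨(ℓ:ℕ)-1, by have := ℓ.isLt; omega⟩)

/-- `v = (x̌ ∂(ℓ-1)) σ(ℓ-1) + x̄`. -/
noncomputable def vPart {m n : ℕ} (x : ZD (m+1) (n+1)) (r ℓ : Fin (m+1))
    (h1 : 1 ≤ (ℓ : ℕ)) : ZD (m+1) (n+1) :=
  act (act (checkPart x r) (face ⟨(ℓ:ℕ)-1, by have := ℓ.isLt; omega⟩))
      (degen ⟨(ℓ:ℕ)-1, by have := ℓ.isLt; omega⟩)
    + barPart x r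

/-- The parent `w = x̌ σℓ + x̄ σ(ℓ-1)`. -/
noncomputable def parent {m n : ℕ} (x : ZD (m+1) (n+1)) (r ℓ : Fin (m+1)) :
    ZD (m+2) (n+1) :=
  act (checkPart x r) (degen ℓ)
    + act (barPart x r) (degen ⟨(ℓ:ℕ)-1, by have := ℓ.isLt; omega⟩)

/-- Bilinear extension of composition: `(x ∘ y)_γ = Σ_{α∘β = γ} x_α · y_β`. -/
noncomputable def zcomp {p m n : ℕ} (x : ZD m n) (y : ZD p m) : ZD p n :=
  x.sum fun α c => c • Finsupp.mapDomain (fun β => α.comp β) y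

theorem exists_of_mem_support_act {a b c : ℕ} {x : ZD b c} {β : Fin a →o Fin b}
    {α' : Fin a →o Fin c} (h : α' ∈ (act x β).support) :
    ∃ α ∈ x.support, α.comp β = α' := by
  classical
  have := Finsupp.mapDomain_support h
  simpa using this

theorem face_val {m : ℕ} (k : Fin (m + 1)) (i : Fin m) :
    (face k i : ℕ) = if (i : ℕ) < k then (i : ℕ) else i + 1 := by
  change (Fin.succAbove k i : ℕ) = _
  simp only [Fin.succAbove, Fin.lt_def, Fin.val_castSucc]
  split_ifs <;> simp

theorem degen_val {m : ℕ} (k : Fin m) (i : Fin (m + 1)) :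
    (degen k i : ℕ) = if (k : ℕ) < i then (i : ℕ) - 1 else i := by
  change (Fin.predAbove k i : ℕ) = _
  simp only [Fin.predAbove, Fin.lt_def, Fin.val_castSucc]
  split_ifs <;> simp

theorem isDegenAt_iff {a b : ℕ} (x : ZD a b) (k : ℕ) :
    isDegenAt x k ↔ ∃ h : k + 1 < a, ∀ α ∈ x.support, α ⟨k, by omega⟩ = α ⟨k + 1, h⟩ := by
  constructor
  · rintro ⟨p, rfl, hk, y, rfl⟩
    refine ⟨by omega, fun α hα => ?_⟩
    obtain ⟨δ, -, rfl⟩ := exists_of_mem_support_act hα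
    refine congrArg δ (Fin.ext ?_)
    simp [degen_val]
  · rintro ⟨h, hx⟩
    obtain ⟨p, rfl⟩ : ∃ p, a = p + 1 := ⟨a - 1, by omega⟩
    have hk : k < p := by omega
    -- The face omitting `k` is a section of `degen k`.
    refine ⟨p, rfl, hk, act x (face ⟨k, by omega⟩), ?_⟩
    simp only [act]
    rw [← Finsupp.mapDomain_comp]
    conv_lhs => rw [← Finsupp.mapDomain_id (v := x)]
    refine Finsupp.mapDomain_congr fun α hα => ?_
    have hα := hx α hα
    refine OrderHom.ext _ _ (funext fun i => ?_)
    change α i = α (face ⟨k, by omega⟩ (degen ⟨k, hk⟩ i))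
    by_cases hi : (i : ℕ) = k
    · have h1 : i = ⟨k, by omega⟩ := Fin.ext hi
      have h2 : face ⟨k, by omega⟩ (degen ⟨k, hk⟩ i) = ⟨k + 1, h⟩ := by
        ext
        simp [face_val, degen_val, hi]
      rw [h2, ← hα]
      exact congrArg α h1
    · refine congrArg α (Fin.ext ?_)
      simp only [face_val, degen_val]
      split_ifs <;> omega

theorem npre_le {a n : ℕ} (α : Fin a →o Fin (n + 1)) (i : Fin a)
    (h : ∀ j < i, α j ≠ Fin.last n) : npre α ≤ a - i := by
  rw [← Fin.card_Ici]
  refine Finset.card_le_card fun j hj => ?_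
  simp only [Finset.mem_filter, Finset.mem_univ, true_and] at hj
  exact Finset.mem_Ici.2 (not_lt.1 fun hji => h j hji hj)

theorem le_npre {a n : ℕ} (α : Fin a →o Fin (n + 1)) (i : Fin a)
    (h : α i = Fin.last n) : a - i ≤ npre α := by
  rw [← Fin.card_Ici]
  refine Finset.card_le_card fun j hj => ?_
  simp only [Finset.mem_filter, Finset.mem_univ, true_and]
  exact top_le_iff.1 (h.symm.le.trans (α.monotone (Finset.mem_Ici.1 hj)))

/-- The corank is determined by the rank. -/
theorem corank_eq {a n : ℕ} {x : ZD a (n + 1)} {r : Fin a} (hr : isRank x r) :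
    corank x = a - r := by
  apply le_antisymm
  · exact Finset.sup_le fun α hα => npre_le α r fun j hj hjn => not_lt.2 (hr.2 ⟨α, hα, hjn⟩) hj
  · obtain ⟨α, hα, h⟩ := hr.1
    exact (le_npre α r h).trans (Finset.le_sup (f := npre) hα)

theorem exists_isRank {a n : ℕ} {x : ZD a (n + 1)} (hA : ¬ inA x) : ∃ r, isRank x r := by
  classical
  have hne : ∃ i : Fin a, ∃ α ∈ x.support, α i = Fin.last n := by
    by_contra! hno
    refine hA fun α hα β hβ => ?_
    have h0 : ∀ α ∈ x.support, npre α = 0 := fun α hα => by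
      simp only [npre, Finset.card_eq_zero, Finset.filter_eq_empty_iff]
      exact fun i _ => hno i α hα
    rw [h0 α hα, h0 β hβ]
  obtain ⟨r, hr⟩ := (Set.toFinite {i : Fin a | ∃ α ∈ x.support, α i = Fin.last n}).exists_minimal
    hne
  exact ⟨r, hr.1, fun j hj => (le_total r j).elim id (hr.2 hj)⟩

theorem exists_isLevel {a n : ℕ} (x : ZD a (n + 1)) (r : Fin a) : ∃ ℓ, isLevel x r ℓ := by
  obtain ⟨l, hl⟩ := (Set.toFinite
    {i : Fin a | ∀ α ∈ (checkPart x r).support, α i = α r}).exists_minimal ⟨r, fun _ _ => rfl⟩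
  exact ⟨l, hl.1, fun j hj => (le_total l j).elim id (hl.2 hj)⟩

theorem mem_support_checkPart {a n : ℕ} {x : ZD a (n + 1)} {r : Fin a}
    {α : Fin a →o Fin (n + 1)} :
    α ∈ (checkPart x r).support ↔ α ∈ x.support ∧ α r ≠ Fin.last n := by
  simp [checkPart, Finsupp.support_filter]

theorem mem_support_barPart {a n : ℕ} {x : ZD a (n + 1)} {r : Fin a}
    {α : Fin a →o Fin (n + 1)} :
    α ∈ (barPart x r).support ↔ α ∈ x.support ∧ α r = Fin.last n := by
  simp [barPart, Finsupp.support_filter]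

/-- If `x` is nondegenerate of positive rank and satisfies (†), its level is positive, so the
truncated subtraction in `dagger` is harmless. -/
theorem level_pos {m n : ℕ} {x : ZD (m + 1) (n + 1)} (hnd : ¬ isDegen x) {r ℓ : Fin (m + 1)}
    (hl : isLevel x r ℓ) (hdag : dagger x r ℓ) (hr : 0 < (r : ℕ)) : 0 < (ℓ : ℕ) := by
  by_contra h0
  have h0 : (ℓ : ℕ) = 0 := by omega
  rw [dagger, isDegenAt_iff, h0] at hdag
  obtain ⟨hm, hbar⟩ := hdag
  refine hnd ⟨0, (isDegenAt_iff x 0).2 ⟨hm, fun α hα => ?_⟩⟩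
  by_cases hαr : α r = Fin.last n
  · exact hbar α (mem_support_barPart.2 ⟨hα, hαr⟩)
  · have h1 : α ℓ = α r := hl.1 α (mem_support_checkPart.2 ⟨hα, hαr⟩)
    have h2 : α ℓ ≤ α ⟨0 + 1, hm⟩ := α.monotone (by simp [Fin.le_def, h0])
    have h3 : α ⟨0 + 1, hm⟩ ≤ α r := α.monotone (by simp only [Fin.le_def]; omega)
    have h4 : (⟨0, by omega⟩ : Fin (m + 1)) = ℓ := Fin.ext h0.symm
    rw [h4]
    exact le_antisymm h2 (h3.trans h1.symm.le)

/-- Claim (faces): if `x` satisfies (†) with corank `c` and level `ℓ`, then for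
every `k ≠ ℓ`, the face `x ∂ₖ` lies in `A`, or satisfies (†), or fails (†) with
`(corank, level)` lexicographically smaller than `(c, ℓ)`. -/
theorem stmt18 (m n : ℕ) (x : ZD (m+1) (n+1)) (hx : memO x) (hnd : ¬ isDegen x)
    (hA : ¬ inA x) (r ℓ : Fin (m+1)) (hr : isRank x r) (hl : isLevel x r ℓ)
    (hdag : dagger x r ℓ) (k : Fin (m+1)) (hk : k ≠ ℓ) :
    inA (act x (face k)) ∨
    (¬ inA (act x (face k)) ∧ ∃ (r' ℓ' : Fin m),
      isRank (act x (face k)) r' ∧ isLevel (act x (face k)) r' ℓ' ∧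
      dagger (act x (face k)) r' ℓ') ∨
    (¬ inA (act x (face k)) ∧ ∃ (r' ℓ' : Fin m),
      isRank (act x (face k)) r' ∧ isLevel (act x (face k)) r' ℓ' ∧
      ¬ dagger (act x (face k)) r' ℓ' ∧
      (corank (act x (face k)) < corank x ∨
        (corank (act x (face k)) = corank x ∧ (ℓ' : ℕ) < (ℓ : ℕ)))) := by
  by_cases hA' : inA (act x (face k))
  · exact Or.inl hA'
  obtain ⟨r', hr'⟩ := exists_isRank hA'
  obtain ⟨ℓ', hl'⟩ := exists_isLevel (act x (face k)) r'
  by_cases hd' : dagger (act x (face k)) r' ℓ'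
  · exact Or.inr (Or.inl ⟨hA', r', ℓ', hr', hl', hd'⟩)
  refine Or.inr (Or.inr ⟨hA', r', ℓ', hr', hl', hd', ?_⟩)
  rw [corank_eq hr, corank_eq hr']
  have hrlt := r.isLt
  have hrlt' := r'.isLt
  rcases le_or_gt (r : ℕ) r' with hrr | hrr
  · left; omega
  have hface : r ≤ face k r' := by
    obtain ⟨α', hα', h⟩ := hr'.1
    obtain ⟨α, hα, rfl⟩ := exists_of_mem_support_act hα'
    exact hr.2 ⟨α, hα, h⟩
  rw [Fin.le_def, face_val] at hface
  have hkr : (k : ℕ) ≤ r' := by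
    by_contra hkr
    rw [if_pos (by omega)] at hface
    omega
  rw [if_neg (by omega)] at hface
  have hfr : face k r' = r := by
    ext; rw [face_val, if_neg (by omega)]; omega
  refine Or.inr ⟨by omega, ?_⟩
  have hℓr : ℓ ≤ r := hl.2 fun _ _ => rfl
  have hpos := level_pos hnd hl hdag (by omega)
  -- Any index of the face that maps into the interval from `ℓ` to `r` bounds the new level.
  have hle : ∀ i : Fin m, ℓ ≤ face k i → face k i ≤ r → ℓ' ≤ i := by
    refine fun i hi hir => hl'.2 fun α' hα' => ?_
    obtain ⟨hα', hn⟩ := mem_support_checkPart.1 hα'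
    obtain ⟨α, hα, rfl⟩ := exists_of_mem_support_act hα'
    simp only [OrderHom.comp_coe, Function.comp_apply, hfr] at hn ⊢
    have h1 : α ℓ = α r := hl.1 α (mem_support_checkPart.2 ⟨hα, hn⟩)
    exact le_antisymm (α.monotone hir) (h1.symm.le.trans (α.monotone hi))
  rw [Fin.le_def] at hℓr
  have hkℓ : (k : ℕ) ≠ ℓ := fun h => hk (Fin.ext h)
  rcases lt_or_gt_of_ne hkℓ with hlt | hgt
  · have hf : face k ⟨ℓ - 1, by omega⟩ = ℓ := by
      ext; simp only [face_val]; split_ifs <;> omega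
    have := hle ⟨ℓ - 1, by omega⟩ hf.ge (hf.le.trans hℓr)
    rw [Fin.le_def] at this
    simp only at this
    omega
  · have hf : face k ⟨ℓ, by omega⟩ = ℓ := by
      ext; simp only [face_val, if_pos hgt]
    have hle := hle ⟨ℓ, by omega⟩ hf.ge (hf.le.trans hℓr)
    rw [Fin.le_def] at hle
    simp only at hle
    by_contra hnlt
    have heq : (ℓ' : ℕ) = ℓ := by omega
    apply hd'
    rw [dagger, isDegenAt_iff] at hdag ⊢
    obtain ⟨hm, hbar⟩ := hdag
    have hm' := ℓ'.isLt
    refine ⟨by omega, fun α' hα' => ?_⟩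
    obtain ⟨hα', hn⟩ := mem_support_barPart.1 hα'
    obtain ⟨α, hα, rfl⟩ := exists_of_mem_support_act hα'
    simp only [OrderHom.comp_coe, Function.comp_apply, hfr] at hn ⊢
    have hf₀ : face k ⟨ℓ' - 1, by omega⟩ = ⟨ℓ - 1, by omega⟩ := by
      ext; simp only [face_val]; split_ifs <;> omega
    have hf₁ : face k ⟨ℓ' - 1 + 1, by omega⟩ = ⟨ℓ - 1 + 1, hm⟩ := by
      ext; simp only [face_val]; split_ifs <;> omega
    rw [hf₀, hf₁]
    exact hbar α (mem_support_barPart.2 ⟨hα, hn⟩)
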